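/- In the linear regression model Y = Xβ + σξ with deterministic design X, let q ≥ 1 and let π = π_1 ⊗ ⋯ ⊗ π_p be a product probability measure on ℝ^p with ∫‖β‖_q^q dπ(β) < ∞. Then: inf over measurable T : ℝ^n → ℝ^p of ∫ E_β[ Σ_{j=1}^p |T_j(Y) − β_j|^q ] dπ(β) ≥ Σ_{j=1}^p inf over measurable T_j : ℝ^n → ℝ of ∫ E[ |T_j(β_j X_j + σξ) − β_j|^q ] dπ_j(β_j), where ξ is a standard Gaussian vector in ℝ^n. -/

import Mathlib

/-! The loss is a sum over coordinates, so the Bayes risk of any estimator `T` is the sum over `j`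
of the Bayes risks of `T_j` for `β_j`. Since the prior is a product, condition on the other
coordinates `β_i`, `i ≠ j`: with these frozen, `Xβ + σξ = (β_j X_j + σξ) + v` for a known
vector `v`, so `y ↦ T_j (y + v)` is an admissible estimator in the one-dimensional problem and the
conditional risk is at least the one-dimensional Bayes risk (`coord_risk_ge`). Averaging over the
remaining coordinates preserves the bound. -/

open MeasureTheory ProbabilityTheory Filter
open scoped ENNReal NNReal BigOperators Classical

noncomputable section

/-- The Gaussian distribution `N(m, σ²)` on `ℝ`. -/
def gauss (m σ : ℝ) : Measure ℝ := gaussianReal m ⟨σ ^ 2, sq_nonneg σ⟩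

/-- The standard Gaussian distribution on `ℝ`. -/
def stdG : Measure ℝ := gaussianReal 0 1

/-- The law of a standard Gaussian vector `ξ ~ N(0, I_n)` on `ℝⁿ`. -/
def stdGV (n : ℕ) : Measure (Fin n → ℝ) := Measure.pi fun _ => gaussianReal 0 1

/-- `Ω^p_{s,a}`: `s`-sparse vectors with nonzero coordinates at least `a` in absolute value. -/
def sparseSet (p s : ℕ) (a : ℝ) : Set (Fin p → ℝ) :=
  {β | (Finset.univ.filter fun i => β i ≠ 0).card ≤ s ∧ ∀ i, β i ≠ 0 → a ≤ |β i|}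

/-- The risk `E_β ‖est(Y) − β‖_q^q` in the linear regression model `Y = Xβ + σξ`. -/
def linRisk (n p : ℕ) (X : Matrix (Fin n) (Fin p) ℝ) (σ q : ℝ)
    (est : (Fin n → ℝ) → Fin p → ℝ) (β : Fin p → ℝ) : ℝ≥0∞ :=
  ∫⁻ ξ, ENNReal.ofReal (∑ j, |est (X.mulVec β + σ • ξ) j - β j| ^ q) ∂(stdGV n)

/-- The Euclidean norm `‖X_j‖₂` of the `j`-th column of `X`. -/
def colNorm (n p : ℕ) (X : Matrix (Fin n) (Fin p) ℝ) (j : Fin p) : ℝ :=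
  Real.sqrt (∑ i, (X i j) ^ 2)

/-- `σ_q^q = E|η|^q` where `η ~ N(0, σ²)`. -/
def sigmaqq (σ q : ℝ) : ℝ := ∫ x, |x| ^ q ∂(gauss 0 σ)

/-- `P(σ ε ≥ t)` for a standard Gaussian `ε`. -/
def PgeS (σ t : ℝ) : ℝ := (stdG {x | t ≤ σ * x}).toReal

instance stdGV_isProbabilityMeasure (n : ℕ) : IsProbabilityMeasure (stdGV n) := by
  unfold stdGV; infer_instance

/-- Changing the `j`-th coordinate of `β` to `b` separates the contribution of the `j`-th column
of `X` from an offset that depends only on the other coordinates. -/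
lemma mulVec_update {n p : ℕ} (X : Matrix (Fin n) (Fin p) ℝ) (β : Fin p → ℝ) (j : Fin p)
    (b : ℝ) :
    X.mulVec (Function.update β j b) =
      b • (fun i => X i j) + X.mulVec (Function.update β j 0) := by
  have h : Function.update β j b = b • Pi.single j (1 : ℝ) + Function.update β j 0 := by
    ext i
    by_cases hi : i = j
    · subst hi; simp
    · simp [hi]
  rw [h, Matrix.mulVec_add, Matrix.mulVec_smul, Matrix.mulVec_single_one]
  rfl

/-- The integrand of the `j`-th coordinate risk is jointly measurable in `(β, ξ)`. -/
lemma measurable_coord_loss {n p : ℕ} (X : Matrix (Fin n) (Fin p) ℝ) (σ q : ℝ)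
    {t : (Fin n → ℝ) → ℝ} (ht : Measurable t) (j : Fin p) :
    Measurable fun z : (Fin p → ℝ) × (Fin n → ℝ) =>
      ENNReal.ofReal (|t (X.mulVec z.1 + σ • z.2) - z.1 j| ^ q) := by
  have h1 : Measurable fun z : (Fin p → ℝ) × (Fin n → ℝ) => X.mulVec z.1 + σ • z.2 :=
    Continuous.measurable (by fun_prop)
  have h2 : Measurable fun z : (Fin p → ℝ) × (Fin n → ℝ) =>
      t (X.mulVec z.1 + σ • z.2) - z.1 j :=
    (ht.comp h1).sub ((measurable_pi_apply j).comp measurable_fst)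
  exact ((continuous_abs.measurable.comp h2).pow_const q).ennreal_ofReal

/-- The Bayes risk of any estimator `t` of `β_j` in the full model is at least the Bayes risk of
the one-dimensional problem in which only `β_j` is unknown. -/
lemma coord_risk_ge {n p : ℕ} (X : Matrix (Fin n) (Fin p) ℝ) (σ q : ℝ)
    (π : Fin p → Measure ℝ) [∀ j, IsProbabilityMeasure (π j)]
    {t : (Fin n → ℝ) → ℝ} (ht : Measurable t) (j : Fin p) :
    (⨅ (Tj : (Fin n → ℝ) → ℝ) (_ : Measurable Tj),
        ∫⁻ b, ∫⁻ ξ,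
          ENNReal.ofReal (|Tj (b • (fun i => X i j) + σ • ξ) - b| ^ q)
          ∂(stdGV n) ∂(π j)) ≤
      ∫⁻ β, ∫⁻ ξ, ENNReal.ofReal (|t (X.mulVec β + σ • ξ) - β j| ^ q)
        ∂(stdGV n) ∂(Measure.pi π) := by
  set c := ⨅ (Tj : (Fin n → ℝ) → ℝ) (_ : Measurable Tj),
        ∫⁻ b, ∫⁻ ξ,
          ENNReal.ofReal (|Tj (b • (fun i => X i j) + σ • ξ) - b| ^ q)
          ∂(stdGV n) ∂(π j) with hc
  have hconst : c = ∫⁻ _ : Fin p → ℝ, c ∂(Measure.pi π) := by simp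
  rw [hconst]
  -- It suffices to compare after integrating out the `j`-th coordinate alone.
  refine lintegral_le_of_lmarginal_le {j} measurable_const
    (measurable_coord_loss X σ q ht j).lintegral_prod_right' ?_
  intro β
  rw [lmarginal_singleton, lmarginal_singleton]
  simp only [lintegral_const, measure_univ, mul_one]
  set v := X.mulVec (Function.update β j 0) with hv
  refine (iInf₂_le (fun y => t (y + v)) (ht.comp (measurable_add_const v))).trans_eq ?_
  refine lintegral_congr fun b => lintegral_congr fun ξ => ?_
  rw [mulVec_update, Function.update_self, add_right_comm]

/-- Lemma: the Bayes risk under a product prior is bounded below by the sum of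
the coordinatewise Bayes risks for the one-dimensional problems `β_j X_j + σξ`. -/
theorem stmt_1 (n p : ℕ) (X : Matrix (Fin n) (Fin p) ℝ) (σ q : ℝ)
    (hσ : 0 < σ) (hq : 1 ≤ q)
    (π : Fin p → Measure ℝ) [∀ j, IsProbabilityMeasure (π j)]
    (hint : Integrable (fun β : Fin p → ℝ => ∑ j, |β j| ^ q) (Measure.pi π)) :
    (⨅ (T : (Fin n → ℝ) → Fin p → ℝ) (_ : Measurable T),
        ∫⁻ β, linRisk n p X σ q T β ∂(Measure.pi π)) ≥
      ∑ j, ⨅ (Tj : (Fin n → ℝ) → ℝ) (_ : Measurable Tj),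
        ∫⁻ b, ∫⁻ ξ,
          ENNReal.ofReal (|Tj (b • (fun i => X i j) + σ • ξ) - b| ^ q)
          ∂(stdGV n) ∂(π j) := by
  refine le_iInf₂ fun T hT => ?_
  have hTj : ∀ j, Measurable fun y => T y j := fun j => (measurable_pi_apply j).comp hT
  have hsum : ∫⁻ β, linRisk n p X σ q T β ∂(Measure.pi π) =
      ∑ j, ∫⁻ β, ∫⁻ ξ, ENNReal.ofReal (|T (X.mulVec β + σ • ξ) j - β j| ^ q)
        ∂(stdGV n) ∂(Measure.pi π) := by
    rw [← lintegral_finsetSum _ fun j _ =>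
      (measurable_coord_loss X σ q (hTj j) j).lintegral_prod_right']
    refine lintegral_congr fun β => ?_
    refine Eq.trans (lintegral_congr fun ξ => ?_) (lintegral_finsetSum _ fun j _ =>
      (measurable_coord_loss X σ q (hTj j) j).comp measurable_prodMk_left)
    exact ENNReal.ofReal_sum_of_nonneg fun j _ => by positivity
  rw [hsum]
  exact Finset.sum_le_sum fun j _ => coord_risk_ge X σ q π (hTj j) j

end
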